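/- Let f : ℕ_{>0} → ℕ be nondecreasing with f(1) ≥ 1 and f(n) ≤ n for all n, and let k(p,q) be positive integers defined for p ≥ 1 and 1 ≤ q ≤ f(p) satisfying k(p,q) ≤ k(p,q+1) and k(p,f(p)) ≤ k(p+1,1). Then the infinite word w = ∏_{p=1}^∞ ∏_{q=1}^{f(p)} (a^p b^q)^{k(p,q)} over {a,b} has subword complexity p_w(n) = O(n² f(n)). -/

import Mathlib

/-!
Split the factors of length `n` by the row `p` in which they start. From row `n + 1` on, every
letter `a` lies in a run of more than `n` letters `a`, so no `a` can separate two letters `b` of the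
same factor: the factor has the form `a^x b^y a^z`, and there are at most `(n + 1)²` of those.

A factor starting in a block `(a^p b^q)^m` with `p ≤ n` either leaves the block, and then starts at
one of its last `n` positions, or may be moved by a multiple of the period `p + q` into the first
copy of `a^p b^q`. There it starts in `a^p`, or at one of the last `n` positions of `a^p b^q`, or it
is `b^n`. A block thus yields at most `p + 2n ≤ 3n` factors besides `b^n`, and the rows `p ≤ n`
consist of at most `n f(n)` blocks.
-/

/-- The factor of the infinite word `u` of length `n` starting at position `i`. -/
def wordSeg {α : Type*} (u : ℕ → α) (i n : ℕ) : List α :=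
  (List.range n).map (fun t => u (i + t))

/-- The set of (finite) factors of the infinite word `u`. -/
def Factors {α : Type*} (u : ℕ → α) : Set (List α) :=
  {w | ∃ i, w = wordSeg u i w.length}

/-- Subword complexity: the number of distinct factors of `u` of length `n`. -/
noncomputable def complexity {α : Type*} (u : ℕ → α) (n : ℕ) : ℕ :=
  {w : List α | w.length = n ∧ w ∈ Factors u}.ncard

/-- `p_L(n)`: the number of words of length `n` in the language `L`. -/
noncomputable def langComplexity {α : Type*} (L : Set (List α)) (n : ℕ) : ℕ :=
  {w ∈ L | w.length = n}.ncard

/-- The block `(a^p b^q)^m` over `{a, b}` with `true = a`, `false = b`. -/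
def blockPQ (p q m : ℕ) : List Bool :=
  (List.replicate m (List.replicate p true ++ List.replicate q false)).flatten

/-- The word `∏_{q=1}^{f(p)} (a^p b^q)^{k(p,q)}`. -/
def rowBlock (f : ℕ → ℕ) (kk : ℕ → ℕ → ℕ) (p : ℕ) : List Bool :=
  ((List.range (f p)).map (fun j => blockPQ p (j + 1) (kk p (j + 1)))).flatten

/-- The finite word `∏_{p=1}^{P} ∏_{q=1}^{f(p)} (a^p b^q)^{k(p,q)}`. -/
def wPrefix (f : ℕ → ℕ) (kk : ℕ → ℕ → ℕ) (P : ℕ) : List Bool :=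
  ((List.range P).map (fun i => rowBlock f kk (i + 1))).flatten

/-- `w` is the infinite word `∏_{p=1}^∞ ∏_{q=1}^{f(p)} (a^p b^q)^{k(p,q)}`: every finite
partial product is a prefix of `w`. -/
def IsProdWord (f : ℕ → ℕ) (kk : ℕ → ℕ → ℕ) (w : ℕ → Bool) : Prop :=
  ∀ P : ℕ, wordSeg w 0 (wPrefix f kk P).length = wPrefix f kk P

open Finset

section Occurrences

variable {α : Type*} {u : ℕ → α} {i : ℕ}

@[simp]
lemma length_wordSeg (u : ℕ → α) (i n : ℕ) : (wordSeg u i n).length = n := by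
  simp [wordSeg]

lemma wordSeg_add (u : ℕ → α) (i m n : ℕ) :
    wordSeg u i (m + n) = wordSeg u i m ++ wordSeg u (i + m) n := by
  simp [wordSeg, List.range_add, Function.comp_def, add_assoc]

lemma wordSeg_eq_wordSeg_iff {u' : ℕ → α} {i' n : ℕ} :
    wordSeg u i n = wordSeg u' i' n ↔ ∀ t < n, u (i + t) = u' (i' + t) := by
  simp [wordSeg]

lemma complexity_le_card {n : ℕ} {S : Finset (List α)} (h : ∀ i, wordSeg u i n ∈ S) :
    complexity u n ≤ S.card := by
  rw [← Set.ncard_coe_finset]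
  refine Set.ncard_le_ncard ?_ S.finite_toSet
  rintro _ ⟨rfl, i, hi⟩
  rw [hi]
  exact h i

/-- The finite word `v` occurs in the infinite word `u` at position `i`. -/
def OccursAt (u : ℕ → α) (i : ℕ) (v : List α) : Prop :=
  wordSeg u i v.length = v

lemma occursAt_append {v v' : List α} :
    OccursAt u i (v ++ v') ↔ OccursAt u i v ∧ OccursAt u (i + v.length) v' := by
  unfold OccursAt
  rw [List.length_append, wordSeg_add]
  exact ⟨fun h => List.append_inj h (length_wordSeg ..), fun ⟨h, h'⟩ => congrArg₂ _ h h'⟩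

lemma occursAt_replicate {n : ℕ} {x : α} :
    OccursAt u i (List.replicate n x) ↔ ∀ t < n, u (i + t) = x := by
  simp [OccursAt, wordSeg, List.eq_replicate_iff]

lemma OccursAt.of_isPrefix {v v' : List α} (h : OccursAt u i v') (hv : v <+: v') :
    OccursAt u i v := by
  obtain ⟨_, rfl⟩ := hv
  exact (occursAt_append.mp h).1

end Occurrences

section Products

variable {α : Type*} {g : ℕ → List α}

/-- The product `g 0 ⋯ g (J - 1)` of the first `J` words of a sequence. The words `wPrefix`,
`rowBlock` and `blockPQ` are all of this form. -/
def prodPrefix (g : ℕ → List α) (J : ℕ) : List α :=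
  ((List.range J).map g).flatten

lemma prodPrefix_succ (g : ℕ → List α) (J : ℕ) :
    prodPrefix g (J + 1) = prodPrefix g J ++ g J := by
  simp [prodPrefix, List.range_succ]

lemma prodPrefix_prefix_of_le (g : ℕ → List α) {j J : ℕ} (h : j ≤ J) :
    prodPrefix g j <+: prodPrefix g J := by
  induction J, h using Nat.le_induction with
  | base => exact List.prefix_rfl
  | succ J _ ih => exact ih.trans (prodPrefix_succ g J ▸ List.prefix_append _ _)

lemma monotone_length_prodPrefix (g : ℕ → List α) :
    Monotone fun J => (prodPrefix g J).length :=
  fun _ _ h => (prodPrefix_prefix_of_le g h).length_le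

lemma length_prodPrefix_const (v : List α) (J : ℕ) :
    (prodPrefix (fun _ => v) J).length = J * v.length := by
  simp [prodPrefix]

lemma le_length_prodPrefix {J : ℕ} (h : ∀ j < J, 1 ≤ (g j).length) :
    J ≤ (prodPrefix g J).length := by
  induction J with
  | zero => exact Nat.zero_le _
  | succ J ih =>
    rw [prodPrefix_succ, List.length_append]
    exact add_le_add (ih fun j hj => h j (by omega)) (h J (by omega))

lemma exists_eq_length_prodPrefix_add {J i : ℕ} (hi : i < (prodPrefix g J).length) :
    ∃ j < J, ∃ t < (g j).length, i = (prodPrefix g j).length + t := by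
  induction J with
  | zero => simp [prodPrefix] at hi
  | succ J ih =>
    rcases lt_or_ge i (prodPrefix g J).length with h | h
    · obtain ⟨j, hj, t, ht, rfl⟩ := ih h
      exact ⟨j, by omega, t, ht, rfl⟩
    · rw [prodPrefix_succ, List.length_append] at hi
      exact ⟨J, by omega, i - (prodPrefix g J).length, by omega, by omega⟩

lemma OccursAt.of_prodPrefix {u : ℕ → α} {i j J : ℕ} (h : OccursAt u i (prodPrefix g J))
    (hj : j < J) : OccursAt u (i + (prodPrefix g j).length) (g j) := by
  have hsucc := h.of_isPrefix (prodPrefix_prefix_of_le g hj)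
  rw [prodPrefix_succ] at hsucc
  exact (occursAt_append.mp hsucc).2

end Products

section SingleRun

variable {u : ℕ → Bool} {i n : ℕ}

/-- The words `a^x b^y a^z` of length `n`, each given by the interval of positions of its
letters `b`. -/
def abaWords (n : ℕ) : Finset (List Bool) :=
  (range (n + 1) ×ˢ range (n + 1)).image
    fun e => wordSeg (fun t => decide (t ∉ Ico e.1 e.2)) 0 n

lemma card_abaWords_le (n : ℕ) : (abaWords n).card ≤ (n + 1) ^ 2 :=
  card_image_le.trans (by simp [sq])

lemma exists_eq_Ico_of_ordConnected {s : Set ℕ} (hs : s.OrdConnected) (hn : ∀ t ∈ s, t < n) :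
    ∃ x ≤ n, ∃ y ≤ n, s = Set.Ico x y := by
  rcases s.eq_empty_or_nonempty with rfl | hne
  · exact ⟨0, n.zero_le, 0, n.zero_le, by simp⟩
  have hbdd : BddAbove s := ⟨n, fun t ht => (hn t ht).le⟩
  have hmin := Nat.sInf_mem hne
  have hmax := Nat.sSup_mem hne hbdd
  refine ⟨sInf s, (hn _ hmin).le, sSup s + 1, hn _ hmax, Set.ext fun t => ⟨fun ht => ?_, ?_⟩⟩
  · exact ⟨Nat.sInf_le ht, Nat.lt_succ_of_le (le_csSup hbdd ht)⟩
  · exact fun ht => hs.out hmin hmax ⟨ht.1, Nat.le_of_lt_succ ht.2⟩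

lemma wordSeg_mem_abaWords (h : {t | t < n ∧ u (i + t) = false}.OrdConnected) :
    wordSeg u i n ∈ abaWords n := by
  obtain ⟨x, hx, y, hy, hxy⟩ := exists_eq_Ico_of_ordConnected h fun t ht => ht.1
  refine mem_image.mpr ⟨(x, y), ?_, wordSeg_eq_wordSeg_iff.mpr fun t ht => ?_⟩
  · simp only [mem_product, mem_range]
    omega
  · have hmem : u (i + t) = false ↔ t ∈ Ico x y := by
      simpa [ht] using Set.ext_iff.mp hxy t
    simp [← hmem]

lemma wordSeg_mem_abaWords_of_runs
    (h : ∀ s, i ≤ s → u s = true →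
      ∃ r p, n ≤ p ∧ s ∈ Set.Ico r (r + p) ∧ ∀ t ∈ Set.Ico r (r + p), u t = true) :
    wordSeg u i n ∈ abaWords n := by
  refine wordSeg_mem_abaWords ⟨fun x ⟨_, hx⟩ z ⟨hzn, hz⟩ y hy => ⟨by grind, ?_⟩⟩
  by_contra hay
  obtain ⟨r, p, hnp, hr, hrun⟩ := h (i + y) (by omega) (by simpa using hay)
  have hxr : i + x ∉ Set.Ico r (r + p) := fun hmem => by simp [hrun _ hmem] at hx
  have hzr : i + z ∉ Set.Ico r (r + p) := fun hmem => by simp [hrun _ hmem] at hz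
  simp only [Set.mem_Ico, Set.mem_Icc] at hr hxr hzr hy
  omega

end SingleRun

section Block

variable {u : ℕ → Bool} {i p q m t n : ℕ}

lemma blockPQ_eq_prodPrefix (p q m : ℕ) :
    blockPQ p q m =
      prodPrefix (fun _ => List.replicate p true ++ List.replicate q false) m := by
  simp [blockPQ, prodPrefix]

lemma length_blockPQ (p q m : ℕ) : (blockPQ p q m).length = m * (p + q) := by
  simp [blockPQ]

lemma apply_of_occursAt_replicate_append
    (h : OccursAt u i (List.replicate p true ++ List.replicate q false)) (ht : t < p + q) :
    u (i + t) = decide (t < p) := by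
  obtain ⟨ha, hb⟩ := occursAt_append.mp h
  rw [occursAt_replicate] at ha hb
  rw [List.length_replicate] at hb
  rcases lt_or_ge t p with htp | htp
  · simp [ha t htp, htp]
  · have := hb (t - p) (by omega)
    rw [add_assoc, Nat.add_sub_cancel' htp] at this
    simp [this, htp]

lemma apply_add_of_occursAt_blockPQ (h : OccursAt u i (blockPQ p q m)) {c : ℕ} (hc : c < m)
    (ht : t < p + q) : u (i + (c * (p + q) + t)) = decide (t < p) := by
  rw [blockPQ_eq_prodPrefix] at h
  have hunit := h.of_prodPrefix hc
  rw [length_prodPrefix_const, List.length_append, List.length_replicate,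
    List.length_replicate] at hunit
  rw [← add_assoc]
  exact apply_of_occursAt_replicate_append hunit ht

lemma apply_of_occursAt_blockPQ (h : OccursAt u i (blockPQ p q m)) (ht : t < m * (p + q)) :
    u (i + t) = decide (t % (p + q) < p) := by
  have hd : 0 < p + q := Nat.pos_of_lt_mul_left ht
  have := apply_add_of_occursAt_blockPQ h ((Nat.div_lt_iff_lt_mul hd).mpr ht) (Nat.mod_lt t hd)
  rwa [Nat.div_add_mod'] at this

lemma exists_run_of_occursAt_blockPQ (h : OccursAt u i (blockPQ p q m)) (ht : t < m * (p + q))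
    (ha : u (i + t) = true) :
    ∃ r, i + t ∈ Set.Ico r (r + p) ∧ ∀ s ∈ Set.Ico r (r + p), u s = true := by
  have hd : 0 < p + q := Nat.pos_of_lt_mul_left ht
  have hmod : t % (p + q) < p := by simpa [apply_of_occursAt_blockPQ h ht] using ha
  have hdecomp := Nat.div_add_mod' t (p + q)
  refine ⟨i + t / (p + q) * (p + q), Set.mem_Ico.mpr (by omega), fun s ⟨hrs, hsr⟩ => ?_⟩
  obtain ⟨e, rfl⟩ := Nat.exists_eq_add_of_le hrs
  have hep : e < p := by omega
  rw [add_assoc, apply_add_of_occursAt_blockPQ h ((Nat.div_lt_iff_lt_mul hd).mpr ht) (by omega)]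
  exact decide_eq_true hep

lemma wordSeg_add_mod_of_occursAt_blockPQ (h : OccursAt u i (blockPQ p q m))
    (ht : t + n ≤ m * (p + q)) :
    wordSeg u (i + t) n = wordSeg u (i + t % (p + q)) n := by
  refine wordSeg_eq_wordSeg_iff.mpr fun s hs => ?_
  have hmod : t % (p + q) ≤ t := Nat.mod_le _ _
  rw [add_assoc, add_assoc, apply_of_occursAt_blockPQ h (by omega),
    apply_of_occursAt_blockPQ h (by omega), Nat.mod_add_mod]

/-- The offsets in the block `(a^p b^q)^m` that lie in the first `a^p`, or among the last `n`
positions of the first `a^p b^q`, or among the last `n` positions of the block. Starting at them,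
one reads every factor of length `n` that starts in the block, except possibly `b^n`. -/
def criticalOffsets (p q m n : ℕ) : Finset ℕ :=
  range p ∪ (Ico (p + q - n) (p + q) ∪ Ico (m * (p + q) - n) (m * (p + q)))

lemma card_criticalOffsets_le (p q m n : ℕ) : (criticalOffsets p q m n).card ≤ p + 2 * n := by
  have hlast (d : ℕ) : (Ico (d - n) d).card ≤ n := by
    rw [Nat.card_Ico]
    omega
  calc (criticalOffsets p q m n).card
      ≤ (range p).card +
          ((Ico (p + q - n) (p + q)).card + (Ico (m * (p + q) - n) (m * (p + q))).card) :=
        (card_union_le _ _).trans (Nat.add_le_add_left (card_union_le _ _) _)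
    _ ≤ p + (n + n) := by
        rw [card_range]
        gcongr <;> exact hlast _
    _ = p + 2 * n := by ring

lemma wordSeg_mem_of_occursAt_blockPQ (h : OccursAt u i (blockPQ p q m))
    (ht : t < m * (p + q)) :
    wordSeg u (i + t) n ∈ abaWords n ∪
      (criticalOffsets p q m n).image fun r => wordSeg u (i + r) n := by
  by_cases hend : m * (p + q) < t + n
  · refine mem_union_right _ (mem_image_of_mem _ ?_)
    simp only [criticalOffsets, mem_union, mem_Ico]
    omega
  rw [wordSeg_add_mod_of_occursAt_blockPQ h (not_lt.mp hend)]
  have hmod : t % (p + q) < p + q := Nat.mod_lt t (Nat.pos_of_lt_mul_left ht)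
  have hmod_le : t % (p + q) ≤ t := Nat.mod_le _ _
  set r := t % (p + q)
  by_cases hr : r ∈ criticalOffsets p q m n
  · exact mem_union_right _ (mem_image_of_mem _ hr)
  · simp only [criticalOffsets, mem_union, mem_range, mem_Ico] at hr
    have hb : ∀ s < n, u (i + r + s) = false := fun s hs => by
      rw [add_assoc, apply_of_occursAt_blockPQ h (by omega), Nat.mod_eq_of_lt (by omega)]
      exact decide_eq_false (by omega)
    have hset : {s | s < n ∧ u (i + r + s) = false} = Set.Iio n :=
      Set.ext fun s => and_iff_left_of_imp (hb s)
    exact mem_union_left _ (wordSeg_mem_abaWords (hset ▸ Set.ordConnected_Iio))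

end Block

section ProductWord

variable {f : ℕ → ℕ} {kk : ℕ → ℕ → ℕ} {w : ℕ → Bool}

/-- The position in the infinite product of the block `(a^p b^q)^{k(p,q)}` with `p = P + 1` and
`q = j + 1`, the indices being shifted as in `wPrefix` and `rowBlock`. -/
def blockStart (f : ℕ → ℕ) (kk : ℕ → ℕ → ℕ) (P j : ℕ) : ℕ :=
  (wPrefix f kk P).length +
    (prodPrefix (fun j => blockPQ (P + 1) (j + 1) (kk (P + 1) (j + 1))) j).length

lemma wPrefix_eq_prodPrefix (f : ℕ → ℕ) (kk : ℕ → ℕ → ℕ) (P : ℕ) :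
    wPrefix f kk P = prodPrefix (fun P => rowBlock f kk (P + 1)) P :=
  rfl

lemma rowBlock_eq_prodPrefix (f : ℕ → ℕ) (kk : ℕ → ℕ → ℕ) (p : ℕ) :
    rowBlock f kk p = prodPrefix (fun j => blockPQ p (j + 1) (kk p (j + 1))) (f p) :=
  rfl

lemma lt_length_wPrefix (hf : ∀ p, 1 ≤ p → 1 ≤ f p)
    (hkpos : ∀ p q, 1 ≤ p → 1 ≤ q → q ≤ f p → 1 ≤ kk p q) (P : ℕ) :
    P < (wPrefix f kk (P + 1)).length := by
  refine le_length_prodPrefix fun P _ => (hf (P + 1) (by omega)).trans ?_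
  refine le_length_prodPrefix fun j hj => ?_
  rw [length_blockPQ]
  exact Nat.mul_pos (hkpos _ _ (by omega) (by omega) hj) (by omega)

lemma exists_eq_blockStart_add {N i : ℕ} (hi : i < (wPrefix f kk N).length) :
    ∃ P < N, ∃ j < f (P + 1), ∃ t < kk (P + 1) (j + 1) * (P + 1 + (j + 1)),
      i = blockStart f kk P j + t := by
  rw [wPrefix_eq_prodPrefix] at hi
  obtain ⟨P, hP, s, hs, rfl⟩ := exists_eq_length_prodPrefix_add hi
  rw [rowBlock_eq_prodPrefix] at hs
  obtain ⟨j, hj, t, ht, rfl⟩ := exists_eq_length_prodPrefix_add hs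
  rw [length_blockPQ] at ht
  exact ⟨P, hP, j, hj, t, ht, (add_assoc ..).symm⟩

lemma blockStart_add_lt_length_wPrefix {P j t : ℕ} (hj : j < f (P + 1))
    (ht : t < kk (P + 1) (j + 1) * (P + 1 + (j + 1))) :
    blockStart f kk P j + t < (wPrefix f kk (P + 1)).length := by
  have hrow := monotone_length_prodPrefix
    (fun j => blockPQ (P + 1) (j + 1) (kk (P + 1) (j + 1))) (Nat.succ_le_of_lt hj)
  simp only [prodPrefix_succ _ j, List.length_append, length_blockPQ, Nat.succ_eq_add_one] at hrow
  rw [wPrefix_eq_prodPrefix, prodPrefix_succ, List.length_append, rowBlock_eq_prodPrefix,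
    ← wPrefix_eq_prodPrefix, blockStart]
  omega

lemma IsProdWord.occursAt_blockPQ (hw : IsProdWord f kk w) {P j : ℕ} (hj : j < f (P + 1)) :
    OccursAt w (blockStart f kk P j) (blockPQ (P + 1) (j + 1) (kk (P + 1) (j + 1))) := by
  have hproduct : OccursAt w 0 (prodPrefix (fun P => rowBlock f kk (P + 1)) (P + 1)) := hw (P + 1)
  have hrow := hproduct.of_prodPrefix P.lt_succ_self
  rw [zero_add, rowBlock_eq_prodPrefix] at hrow
  exact hrow.of_prodPrefix hj

lemma IsProdWord.exists_run (hw : IsProdWord f kk w)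
    (hinf : ∀ i, ∃ P, i < (wPrefix f kk P).length) {n s : ℕ}
    (hs : (wPrefix f kk n).length ≤ s) (ha : w s = true) :
    ∃ r p, n ≤ p ∧ s ∈ Set.Ico r (r + p) ∧ ∀ t ∈ Set.Ico r (r + p), w t = true := by
  obtain ⟨N, hN⟩ := hinf s
  obtain ⟨P, -, j, hj, t, ht, rfl⟩ := exists_eq_blockStart_add hN
  have hP : n < P + 1 := (monotone_length_prodPrefix _).reflect_lt
    (hs.trans_lt (blockStart_add_lt_length_wPrefix hj ht))
  obtain ⟨r, hr⟩ := exists_run_of_occursAt_blockPQ (hw.occursAt_blockPQ hj) ht ha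
  exact ⟨r, P + 1, hP.le, hr⟩

/-- The factors of length `n` of `w` that start at a critical offset of a block of one of the
first `n` rows. All other factors of length `n` belong to `abaWords n`. -/
def criticalFactors (f : ℕ → ℕ) (kk : ℕ → ℕ → ℕ) (w : ℕ → Bool) (n : ℕ) : Finset (List Bool) :=
  ((range n).sigma fun P => range (f (P + 1))).biUnion fun b =>
    (criticalOffsets (b.1 + 1) (b.2 + 1) (kk (b.1 + 1) (b.2 + 1)) n).image
      fun r => wordSeg w (blockStart f kk b.1 b.2 + r) n

lemma card_criticalFactors_le (f : ℕ → ℕ) (kk : ℕ → ℕ → ℕ) (w : ℕ → Bool) (n : ℕ) :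
    (criticalFactors f kk w n).card ≤ (∑ P ∈ range n, f (P + 1)) * (3 * n) := by
  have hblocks : ((range n).sigma fun P => range (f (P + 1))).card = ∑ P ∈ range n, f (P + 1) := by
    simp [card_sigma]
  rw [← hblocks]
  refine card_biUnion_le_card_mul _ _ _ fun b hb => ?_
  have hP : b.1 < n := mem_range.mp (mem_sigma.mp hb).1
  exact card_image_le.trans ((card_criticalOffsets_le ..).trans (by omega))

lemma IsProdWord.wordSeg_mem_abaWords_union (hw : IsProdWord f kk w)
    (hinf : ∀ i, ∃ P, i < (wPrefix f kk P).length) (n i : ℕ) :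
    wordSeg w i n ∈ abaWords n ∪ criticalFactors f kk w n := by
  rcases lt_or_ge i (wPrefix f kk n).length with hi | hi
  · obtain ⟨P, hP, j, hj, t, ht, rfl⟩ := exists_eq_blockStart_add hi
    have hblock : (⟨P, j⟩ : Σ _ : ℕ, ℕ) ∈ (range n).sigma fun P => range (f (P + 1)) :=
      mem_sigma.mpr ⟨mem_range.mpr hP, mem_range.mpr hj⟩
    rcases mem_union.mp (wordSeg_mem_of_occursAt_blockPQ (n := n) (hw.occursAt_blockPQ hj) ht)
      with haba | hcrit
    · exact mem_union_left _ haba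
    · exact mem_union_right _ (mem_biUnion.mpr ⟨⟨P, j⟩, hblock, hcrit⟩)
  · exact mem_union_left _ (wordSeg_mem_abaWords_of_runs fun s hs ha =>
      hw.exists_run hinf (hi.trans hs) ha)

theorem IsProdWord.complexity_le (hw : IsProdWord f kk w)
    (hinf : ∀ i, ∃ P, i < (wPrefix f kk P).length) (n : ℕ) :
    complexity w n ≤ (n + 1) ^ 2 + (∑ P ∈ range n, f (P + 1)) * (3 * n) :=
  calc complexity w n
      ≤ (abaWords n ∪ criticalFactors f kk w n).card :=
        complexity_le_card (hw.wordSeg_mem_abaWords_union hinf n)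
    _ ≤ (abaWords n).card + (criticalFactors f kk w n).card := card_union_le _ _
    _ ≤ _ := add_le_add (card_abaWords_le n) (card_criticalFactors_le f kk w n)

theorem stmt19_general (hf1 : 1 ≤ f 1) (hmono : ∀ m n, 1 ≤ m → m ≤ n → f m ≤ f n)
    (hinf : ∀ i, ∃ P, i < (wPrefix f kk P).length) (hw : IsProdWord f kk w) :
    ∃ c : ℕ, ∀ n, 1 ≤ n → complexity w n ≤ c * (n ^ 2 * f n) := by
  refine ⟨7, fun n hn => ?_⟩
  have hfn : 1 ≤ f n := hf1.trans (hmono 1 n le_rfl hn)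
  have hsum : ∑ P ∈ range n, f (P + 1) ≤ n * f n := by
    simpa using sum_le_card_nsmul (range n) (fun P => f (P + 1)) (f n)
      fun P hP => hmono _ _ (by omega) (mem_range.mp hP)
  calc complexity w n
      ≤ (n + 1) ^ 2 + (∑ P ∈ range n, f (P + 1)) * (3 * n) := hw.complexity_le hinf n
    _ ≤ (2 * n) ^ 2 * f n + n * f n * (3 * n) := by
        gcongr
        exact (Nat.pow_le_pow_left (by omega) 2).trans (Nat.le_mul_of_pos_right _ hfn)
    _ = 7 * (n ^ 2 * f n) := by ring

end ProductWord

/-- the word `w = ∏_{p=1}^∞ ∏_{q=1}^{f(p)} (a^p b^q)^{k(p,q)}` has subword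
complexity `p_w(n) = O(n² f(n))`. -/
theorem stmt19 (f : ℕ → ℕ) (hf1 : 1 ≤ f 1)
    (hmono : ∀ m n, 1 ≤ m → m ≤ n → f m ≤ f n)
    (hle : ∀ n, 1 ≤ n → f n ≤ n)
    (kk : ℕ → ℕ → ℕ)
    (hkpos : ∀ p q, 1 ≤ p → 1 ≤ q → q ≤ f p → 1 ≤ kk p q)
    (hk1 : ∀ p q, 1 ≤ p → 1 ≤ q → q + 1 ≤ f p → kk p q ≤ kk p (q + 1))
    (hk2 : ∀ p, 1 ≤ p → kk p (f p) ≤ kk (p + 1) 1)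
    (w : ℕ → Bool) (hw : IsProdWord f kk w) :
    ∃ c : ℕ, ∀ n, 1 ≤ n → complexity w n ≤ c * (n ^ 2 * f n) := by
  have hf : ∀ p, 1 ≤ p → 1 ≤ f p := fun p hp => hf1.trans (hmono 1 p le_rfl hp)
  exact stmt19_general hf1 hmono (fun i => ⟨i + 1, lt_length_wPrefix hf hkpos i⟩) hw
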